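/- arXiv:2108.07613 — 4 statements merged into one kernel-verified Lean document; each statement's English description precedes it below -/
import Mathlib

section
/- Every monotone side-effecting constraint system over a family of complete lattices has a least solution; that is, there exists a solution η* such that η* ≤ η (pointwise) for every solution η. -/
/-- A map `η` is a solution of the side-effecting constraint system given by
left-hand sides `lhs` and right-hand sides `rhs` if, for every constraint `c`,
both the side-effects `(rhs c η).1` are accounted for pointwise and the
contribution `(rhs c η).2` to the left-hand side is accounted for. -/
def IsSolution {X : Type*} {D : X → Type*} [∀ x, CompleteLattice (D x)]
    {C : Type*} (lhs : C → X)
    (rhs : ∀ c : C, (∀ x, D x) → ((∀ x, D x) × D (lhs c)))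
    (η : ∀ x, D x) : Prop :=
  ∀ c : C, (rhs c η).1 ≤ η ∧ (rhs c η).2 ≤ η (lhs c)

/-!
Joining the side-effects and the left-hand-side contributions of all constraints gives a single
operator on `∀ x, D x`. Its pre-fixed points are exactly the solutions of the system, and it is
monotone when the system is, so Knaster–Tarski provides a least one.
-/

theorem update_bot_le_iff {ι : Type*} {α : ι → Type*} [DecidableEq ι] [∀ i, Preorder (α i)]
    [∀ i, OrderBot (α i)] {i : ι} {a : α i} {f : ∀ i, α i} :
    Function.update ⊥ i a ≤ f ↔ a ≤ f i := by
  simp [update_le_iff]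

section JointOperator

variable {X : Type*} {D : X → Type*} [∀ x, CompleteLattice (D x)] {C : Type*} {lhs : C → X}
  {rhs : ∀ c : C, (∀ x, D x) → ((∀ x, D x) × D (lhs c))}

open scoped Classical in
/-- The joint operator of a side-effecting constraint system sends `η` to the join of everything
the constraints demand when evaluated at `η`. The contribution of a constraint to its left-hand
side is encoded as the map that is `⊥` at all other unknowns. -/
noncomputable def jointOperator (lhs : C → X)
    (rhs : ∀ c : C, (∀ x, D x) → ((∀ x, D x) × D (lhs c))) (η : ∀ x, D x) : ∀ x, D x :=
  ⨆ c, (rhs c η).1 ⊔ Function.update ⊥ (lhs c) (rhs c η).2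

theorem isSolution_iff_jointOperator_le {η : ∀ x, D x} :
    IsSolution lhs rhs η ↔ jointOperator lhs rhs η ≤ η := by
  simp only [IsSolution, jointOperator, iSup_le_iff, sup_le_iff, update_bot_le_iff]

theorem monotone_jointOperator (hmono : ∀ c, Monotone (rhs c)) :
    Monotone (jointOperator lhs rhs) := by
  classical
  intro η η' hη
  refine iSup_mono fun c => ?_
  obtain ⟨sideEffects_le, contribution_le⟩ := hmono c hη
  exact sup_le_sup sideEffects_le (Function.update_mono contribution_le)

end JointOperator

/-- Every monotone side-effecting constraint system over a family of complete
lattices has a least solution. -/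
theorem exists_least_solution {X : Type*} {D : X → Type*}
    [∀ x, CompleteLattice (D x)] {C : Type*} (lhs : C → X)
    (rhs : ∀ c : C, (∀ x, D x) → ((∀ x, D x) × D (lhs c)))
    (hmono : ∀ c : C, Monotone (rhs c)) :
    ∃ ηstar : ∀ x, D x, IsSolution lhs rhs ηstar ∧
      ∀ η : ∀ x, D x, IsSolution lhs rhs η → ηstar ≤ η := by
  let F : (∀ x, D x) →o (∀ x, D x) := ⟨jointOperator lhs rhs, monotone_jointOperator hmono⟩
  simp only [isSolution_iff_jointOperator_le]
  exact ⟨F.lfp, F.isLeast_lfp_le⟩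
end

section
/- For a monotone side-effecting constraint system over a family of complete lattices, the top element of the pointwise-ordered product is a solution, and the set of solutions is closed under arbitrary pointwise infima; consequently the pointwise infimum of the set of all solutions is itself a solution and is the least solution of the system. -/
/-!
Constraint `c` is the single inequality `rhs c η ≤ (η, η (lhs c))` in a product lattice: its left
side is monotone in `η`, and its right side preserves infima. Such an inequality is inherited by
the infimum of any set of maps satisfying it.
-/

theorem le_of_mem_lowerBounds_of_isGLB_image {α β : Type*} [Preorder α] [Preorder β] {f g : α → β}
    {S : Set α} {a : α} (hf : Monotone f) (ha : a ∈ lowerBounds S)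
    (hga : IsGLB (g '' S) (g a)) (hS : ∀ b ∈ S, f b ≤ g b) : f a ≤ g a :=
  hga.2 (Set.forall_mem_image.2 fun b hb => (hf (ha hb)).trans (hS b hb))

theorem isGLB_image_prodMk_apply {X : Type*} {D : X → Type*} [∀ x, Preorder (D x)]
    {S : Set (∀ x, D x)} {η : ∀ x, D x} (hη : IsGLB S η) (x : X) :
    IsGLB ((fun ξ => (ξ, ξ x)) '' S) (η, η x) := by
  simp only [isGLB_prod, Set.image_image, Set.image_id']
  exact ⟨hη, isGLB_pi.1 hη x⟩

namespace IsSolution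

variable {X : Type*} {D : X → Type*} [∀ x, CompleteLattice (D x)] {C : Type*} {lhs : C → X}
  {rhs : ∀ c : C, (∀ x, D x) → ((∀ x, D x) × D (lhs c))}

theorem top : IsSolution lhs rhs ⊤ :=
  fun _ => ⟨le_top, le_top⟩

theorem of_isGLB (hmono : ∀ c, Monotone (rhs c)) {S : Set (∀ x, D x)} {η : ∀ x, D x}
    (hη : IsGLB S η) (hS : ∀ ξ ∈ S, IsSolution lhs rhs ξ) : IsSolution lhs rhs η :=
  fun c => le_of_mem_lowerBounds_of_isGLB_image (hmono c) hη.1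
    (isGLB_image_prodMk_apply hη (lhs c)) fun ξ hξ => hS ξ hξ c

theorem isLeast_sInf (hmono : ∀ c, Monotone (rhs c)) :
    IsLeast {η | IsSolution lhs rhs η} (sInf {η | IsSolution lhs rhs η}) :=
  ⟨of_isGLB hmono (isGLB_sInf _) fun _ hη => hη, (isGLB_sInf _).1⟩

end IsSolution

/-- For a monotone side-effecting constraint system over a family of complete
lattices: the top element is a solution, solutions are closed under arbitrary
pointwise infima, and consequently the pointwise infimum of all solutions is a
solution and is the least solution. -/
theorem top_solution_inf_closed_least {X : Type*} {D : X → Type*}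
    [∀ x, CompleteLattice (D x)] {C : Type*} (lhs : C → X)
    (rhs : ∀ c : C, (∀ x, D x) → ((∀ x, D x) × D (lhs c)))
    (hmono : ∀ c : C, Monotone (rhs c)) :
    IsSolution lhs rhs (⊤ : ∀ x, D x) ∧
    (∀ S : Set (∀ x, D x), (∀ η ∈ S, IsSolution lhs rhs η) →
      IsSolution lhs rhs (sInf S)) ∧
    (IsSolution lhs rhs (sInf {η | IsSolution lhs rhs η}) ∧
      ∀ η : ∀ x, D x, IsSolution lhs rhs η →
        sInf {η | IsSolution lhs rhs η} ≤ η) := by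
  have hleast := IsSolution.isLeast_sInf hmono
  exact ⟨.top, fun S hS => .of_isGLB hmono (isGLB_sInf S) hS, hleast.1, fun _ hη => hleast.2 hη⟩
end

section
/- Let F be the induced operator of a side-effecting constraint system, defined by (F η) x = ⨆_{c ∈ C} ( ((f_c η).1) x ⊔ e_c x ), where e_c x equals (f_c η).2 (transported along the equality) if x = x_c and ⊥ otherwise. Then (i) a map η is a solution of the system if and only if F η ≤ η pointwise; (ii) if the system is monotone then F is a monotone operator on Π x, D x and the least solution of the system equals the least fixed point of F (given by Knaster–Tarski). -/
/-- The induced operator of a side-effecting constraint system: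
`(F η) x = ⨆ c, ((rhs c η).1 x ⊔ e_c x)` where `e_c x` is the contribution
`(rhs c η).2` transported along the equality if `x = lhs c`, and `⊥` otherwise. -/
noncomputable def inducedF {X : Type*} {D : X → Type*} [∀ x, CompleteLattice (D x)]
    {C : Type*} (lhs : C → X)
    (rhs : ∀ c : C, (∀ x, D x) → ((∀ x, D x) × D (lhs c)))
    (η : ∀ x, D x) : ∀ x, D x :=
  fun x => ⨆ c : C, ((rhs c η).1 x ⊔ (open Classical in if h : lhs c = x then h ▸ (rhs c η).2 else ⊥))

/-!
`inducedF lhs rhs η` is the least map that accounts for all side-effects and contributions of the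
constraints evaluated at `η`. Being a solution is therefore being a prefixed point, and
Knaster–Tarski identifies the least prefixed point of a monotone operator with its least fixed
point.
-/

section

variable {X : Type*} {D : X → Type*} [∀ x, CompleteLattice (D x)] {C : Type*} {lhs : C → X}
  {rhs : ∀ c : C, (∀ x, D x) → ((∀ x, D x) × D (lhs c))}

theorem inducedF_eq_iSup_sup_update [DecidableEq X] (η : ∀ x, D x) :
    inducedF lhs rhs η = ⨆ c, (rhs c η).1 ⊔ Function.update ⊥ (lhs c) (rhs c η).2 := by
  ext x
  simp only [inducedF, iSup_apply, Pi.sup_apply, Function.update, eq_comm (a := x), Pi.bot_apply]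
  -- The two sides now differ only in their `Decidable` instances.
  congr!

theorem inducedF_le_iff {η ζ : ∀ x, D x} :
    inducedF lhs rhs η ≤ ζ ↔ ∀ c, (rhs c η).1 ≤ ζ ∧ (rhs c η).2 ≤ ζ (lhs c) := by
  classical
  simp only [inducedF_eq_iSup_sup_update, iSup_le_iff, sup_le_iff, update_le_iff, Pi.bot_apply,
    bot_le, implies_true, and_true]

theorem isSolution_iff_inducedF_le {η : ∀ x, D x} :
    IsSolution lhs rhs η ↔ inducedF lhs rhs η ≤ η :=
  inducedF_le_iff.symm

theorem monotone_inducedF (hrhs : ∀ c, Monotone (rhs c)) : Monotone (inducedF lhs rhs) := by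
  intro η ζ hηζ
  have hζ := inducedF_le_iff.mp (le_refl (inducedF lhs rhs ζ))
  exact inducedF_le_iff.mpr fun c =>
    ⟨(hrhs c hηζ).1.trans (hζ c).1, (hrhs c hηζ).2.trans (hζ c).2⟩

theorem isLeast_isSolution_lfp (hF : Monotone (inducedF lhs rhs)) :
    IsLeast {η | IsSolution lhs rhs η} (OrderHom.lfp ⟨inducedF lhs rhs, hF⟩) := by
  simp only [isSolution_iff_inducedF_le]
  exact OrderHom.isLeast_lfp_le ⟨inducedF lhs rhs, hF⟩

end

/-- (i) `η` is a solution iff `F η ≤ η`; (ii) if the system is monotone then the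
induced operator `F` is monotone and the least solution equals the least fixed
point of `F` given by Knaster–Tarski. -/
theorem solution_iff_prefixedpoint_and_lfp {X : Type*} {D : X → Type*}
    [∀ x, CompleteLattice (D x)] {C : Type*} (lhs : C → X)
    (rhs : ∀ c : C, (∀ x, D x) → ((∀ x, D x) × D (lhs c))) :
    (∀ η : ∀ x, D x, IsSolution lhs rhs η ↔ inducedF lhs rhs η ≤ η) ∧
    ((∀ c : C, Monotone (rhs c)) →
      ∃ hF : Monotone (inducedF lhs rhs),
        IsSolution lhs rhs (OrderHom.lfp ⟨inducedF lhs rhs, hF⟩) ∧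
        ∀ η : ∀ x, D x, IsSolution lhs rhs η →
          OrderHom.lfp ⟨inducedF lhs rhs, hF⟩ ≤ η) := by
  refine ⟨fun _ => isSolution_iff_inducedF_le, fun hrhs => ⟨monotone_inducedF hrhs, ?_⟩⟩
  have hleast := isLeast_isSolution_lfp (monotone_inducedF hrhs)
  exact ⟨hleast.1, fun _ hη => hleast.2 hη⟩
end

section
/- Fixpoint transfer: let L and L' be complete lattices, F : L → L and F' : L' → L' monotone functions, and g : L → L' a map preserving arbitrary suprema (in particular g ⊥ = ⊥) such that g ∘ F = F' ∘ g. Then g maps the least fixed point of F to the least fixed point of F', i.e. g (lfp F) = lfp F'. -/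
/-!
The lower bound `lfp F' ≤ g (lfp F)` holds because `g (lfp F)` is a fixed point of `F'`. For the
upper bound, `g a ≤ lfp F'` is an admissible property of `a`, preserved by `F` and by suprema of
chains. Such a property holds at `lfp F`: by Zorn's lemma there is a maximal `a ≤ lfp F` satisfying
it among those with `a ≤ F a`, and maximality forces `F a = a`.
-/

section

variable {α β : Type*} [CompleteLattice α] [CompleteLattice β]

theorem sSup_le_map_sSup (f : α →o α) {s : Set α} (hs : ∀ a ∈ s, a ≤ f a) :
    sSup s ≤ f (sSup s) :=
  sSup_le fun a ha => (hs a ha).trans (f.monotone (le_sSup ha))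

theorem lfp_induction_of_isChain (f : α →o α) {p : α → Prop}
    (step : ∀ a, p a → a ≤ f.lfp → p (f a))
    (hSup : ∀ c, IsChain (· ≤ ·) c → (∀ a ∈ c, p a) → p (sSup c)) : p f.lfp := by
  obtain ⟨m, hm⟩ : ∃ m, Maximal (· ∈ {a | p a ∧ a ≤ f.lfp ∧ a ≤ f a}) m :=
    zorn_le₀ _ fun c hc hchain =>
      ⟨sSup c, ⟨hSup c hchain fun a ha => (hc ha).1, sSup_le fun a ha => (hc ha).2.1,
        sSup_le_map_sSup f fun a ha => (hc ha).2.2⟩, fun _ => le_sSup⟩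
  obtain ⟨hpm, hm_lfp, hm_map⟩ := hm.prop
  have map_le : f m ≤ m :=
    hm.le_of_ge ⟨step m hpm hm_lfp, f.map_le_lfp hm_lfp, f.monotone hm_map⟩ hm_map
  have m_eq_lfp : m = f.lfp := hm_lfp.antisymm (f.lfp_le map_le)
  exact m_eq_lfp ▸ hpm

theorem map_lfp_le_lfp {f : α →o α} {f' : β →o β} {g : α → β}
    (hg : ∀ c, IsChain (· ≤ ·) c → g (sSup c) ≤ sSup (g '' c))
    (h : g ∘ f ≤ f' ∘ g) : g f.lfp ≤ f'.lfp := by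
  refine lfp_induction_of_isChain f (p := fun a => g a ≤ f'.lfp) ?_ ?_
  · intro a ha _
    exact (h a).trans (f'.map_le_lfp ha)
  · intro c hchain hc
    exact (hg c hchain).trans (sSup_le (Set.forall_mem_image.2 hc))

theorem lfp_le_map_lfp {f : α →o α} {f' : β →o β} {g : α → β}
    (h : f' ∘ g ≤ g ∘ f) : f'.lfp ≤ g f.lfp :=
  f'.lfp_le ((h f.lfp).trans_eq (congrArg g f.map_lfp))

theorem fixpoint_transfer_general (f : α →o α) (f' : β →o β) (g : α → β)
    (hg : ∀ c, IsChain (· ≤ ·) c → g (sSup c) ≤ sSup (g '' c))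
    (hcomm : g ∘ f = f' ∘ g) : g f.lfp = f'.lfp :=
  (map_lfp_le_lfp hg hcomm.le).antisymm (lfp_le_map_lfp hcomm.ge)

end

/-- Fixpoint transfer: a map `g` preserving arbitrary suprema that intertwines
the monotone functions `F` and `F'` maps the least fixed point of `F` to the
least fixed point of `F'`. -/
theorem fixpoint_transfer {L L' : Type*} [CompleteLattice L] [CompleteLattice L']
    (F : L → L) (hF : Monotone F) (F' : L' → L') (hF' : Monotone F')
    (g : L → L')
    (hg : ∀ s : Set L, g (sSup s) = sSup (g '' s))
    (hcomm : g ∘ F = F' ∘ g) :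
    g (OrderHom.lfp ⟨F, hF⟩) = OrderHom.lfp ⟨F', hF'⟩ :=
  fixpoint_transfer_general ⟨F, hF⟩ ⟨F', hF'⟩ g (fun c _ => (hg c).le) hcomm
end
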